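/- Let d > 6 be an integer and let σ² ∈ (0,∞). Define G : ℤ^d → [0,∞) by G(z) = (σ²/2)·(g⋆g)(z) + (1 − σ²/2)·g(z) + (1 − σ²/2)·(1/(2d))·Σ_{e∈ℤ^d, ‖e‖=1} g(z+e). Then there is a constant c_{G⋆g} > 0, depending only on d and σ², such that for every ε > 0 one has (G⋆g)(z) = c_{G⋆g}·‖z‖^{−(d−6)} + o(‖z‖^{−(d−4−ε)}) as ‖z‖ → ∞; that is, ‖z‖^{d−4−ε}·((G⋆g)(z) − c_{G⋆g}·‖z‖^{−(d−6)}) → 0 as ‖z‖ → ∞. -/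

import Mathlib

/-!
Write `g^{⋆j}` for convolution powers of the Green's function. Since `g = δ₀ + P g`, with `P` the
nearest-neighbour average, `G = (σ²/2) g⋆g + (1 - σ²/2) (2 g - δ₀)`, and hence
`G⋆g = (σ²/2) g^{⋆3} + (1 - σ²/2) (2 g^{⋆2} - g)` (`Ggconv_eq`).

Let the walk jump at the times of a rate-one Poisson process. Its heat kernel `q_t` satisfies
`g^{⋆(j+1)} = ∫₀^∞ (t^j / j!) q_t dt`, so that `(G⋆g)(z) = ∫₀^∞ w(t) q_t(z) dt` with
`w(t) = (σ²/4) t² + (1 - σ²/2) (2t - 1)` (`Ggconv_eq_integral`). In continuous time the coordinates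
are independent, so `q_t(z) = ∏ᵢ p_{t/d}(zᵢ)` with `p` the one-dimensional heat kernel
(`hasSum_prod_heat1`). This reduces the local limit theorem to a one-dimensional Fourier
computation: `q_t` differs from the Gaussian kernel by `O(t^{-d/2-1})`, uniformly in `z`
(`heat1_sub_gauss1`, `heat_bounds`).

By Brownian scaling, `∫₀^∞ (σ²/4) t² · Gaussian_t(z) dt` is exactly a constant times `‖z‖^{6-d}`
(`integral_gaussD`). With `R = ‖z‖` and `T = R^{2-δ}`, the times `t > T` contribute an error of order
`∫_T^∞ t^{1-d/2} dt`, which is `O(T^{2-d/2}) = O(R^{4-d+δ(d-4)/2})`. For `t ≤ T` both kernels are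
smaller than any power of `R`, by Chernoff's bound for the walk (`heat_small_time`) and directly for
the Gaussian (`gaussD_small_time`). This is `Ggconv_bound`; taking `δ` small in terms of `ε`
concludes.
-/

open Filter

noncomputable section

/-- `srwP d k x` is the probability that the simple random walk on `ℤ^d`
started at `0` is at `x` at time `k`. -/
def srwP (d : ℕ) : ℕ → (Fin d → ℤ) → ENNReal
  | 0, x => if x = 0 then 1 else 0
  | k + 1, x =>
      (2 * d : ENNReal)⁻¹ *
        ∑ i : Fin d, (srwP d k (x - Pi.single i 1) + srwP d k (x + Pi.single i 1))

/-- The Euclidean norm on `ℤ^d`. -/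
def nrmZ (d : ℕ) (x : Fin d → ℤ) : ℝ := Real.sqrt (∑ i, ((x i : ℝ)) ^ 2)

/-- The Green's function of the simple random walk on `ℤ^d`. -/
def green (d : ℕ) (x : Fin d → ℤ) : ENNReal := ∑' k : ℕ, srwP d k x

/-- Convolution of two `[0,∞]`-valued functions on `ℤ^d`. -/
def convE (d : ℕ) (f h : (Fin d → ℤ) → ENNReal) (z : Fin d → ℤ) : ENNReal :=
  ∑' x, f x * h (z - x)

/-- The function `G(z) = (σ²/2)(g⋆g)(z) + (1−σ²/2) g(z) + (1−σ²/2)(2d)⁻¹ Σ_{‖e‖=1} g(z+e)`. -/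
def Gfun (d : ℕ) (σ2 : ℝ) (z : Fin d → ℤ) : ℝ :=
  σ2 / 2 * (convE d (green d) (green d) z).toReal
    + (1 - σ2 / 2) * (green d z).toReal
    + (1 - σ2 / 2) * (1 / (2 * (d : ℝ))) *
        ∑' e : Fin d → ℤ, (if nrmZ d e = 1 then (green d (z + e)).toReal else 0)

/-- The convolution `(G ⋆ g)(z) = Σ_x G(x) g(z − x)` (real-valued). -/
def Ggconv (d : ℕ) (σ2 : ℝ) (z : Fin d → ℤ) : ℝ :=
  ∑' x : Fin d → ℤ, Gfun d σ2 x * (green d (z - x)).toReal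

section

open MeasureTheory Real

/-! ### One-dimensional heat kernel and its Gaussian approximation -/

/-- The one-dimensional continuous-time heat kernel at time `s` and site `n`, written as a
real Fourier coefficient (it equals `e^{-s} I_n(s)` with `I_n` the modified Bessel function). -/
def heat1 (s : ℝ) (n : ℤ) : ℝ :=
  (2 * π)⁻¹ * ∫ θ in Set.Ioc (-π) π, exp (-(s * (1 - cos θ))) * cos (n * θ)

/-- The density at `x` of the centred Gaussian law of variance `s`. -/
def gauss1 (s x : ℝ) : ℝ := (√(2 * Real.pi * s))⁻¹ * Real.exp (-(x ^ 2 / (2 * s)))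

/-- Fourier inversion for the Gaussian density. -/
lemma gauss1_eq_integral {s : ℝ} (hs : 0 < s) (x : ℝ) :
    gauss1 s x = (2 * π)⁻¹ * ∫ θ : ℝ, exp (-(s / 2 * θ ^ 2)) * cos (x * θ) := by
  have hb : 0 < ((s / 2 : ℝ) : ℂ).re := by simpa using hs
  have h := fourierIntegral_gaussian hb (x : ℂ)
  have h2 : ∫ θ : ℝ, exp (-(s / 2 * θ ^ 2)) * cos (x * θ)
      = (∫ θ : ℝ, Complex.exp (Complex.I * x * θ) *
          Complex.exp (-((s / 2 : ℝ) : ℂ) * (θ : ℂ) ^ 2)).re := by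
    have hi : Integrable (fun θ : ℝ => Complex.exp (Complex.I * x * θ) *
          Complex.exp (-((s / 2 : ℝ) : ℂ) * (θ : ℂ) ^ 2)) := by
      refine (integrable_cexp_quadratic (b := ((s / 2 : ℝ) : ℂ)) hb
        (Complex.I * x) 0).congr (ae_of_all _ fun θ => ?_)
      simp only [← Complex.exp_add]
      congr 1; ring
    rw [← Complex.reCLM_apply, ← ContinuousLinearMap.integral_comp_comm _ hi]
    congr 1; ext θ
    rw [Complex.reCLM_apply]
    have e1 : Complex.exp (-((s / 2 : ℝ) : ℂ) * (θ : ℂ) ^ 2) = ((exp (-(s / 2 * θ ^ 2)) : ℝ) : ℂ) := by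
      push_cast; congr 1; ring
    rw [e1, Complex.re_mul_ofReal, Complex.exp_re]
    have : Complex.I * x * θ = ((x * θ : ℝ) : ℂ) * Complex.I := by push_cast; ring
    rw [this]
    simp [mul_comm]
  rw [h2, h]
  have e2 : ((π : ℂ) / ((s / 2 : ℝ) : ℂ)) ^ (1 / 2 : ℂ) = ((√(π / (s / 2)) : ℝ) : ℂ) := by
    rw [Real.sqrt_eq_rpow, Complex.ofReal_cpow (by positivity)]
    push_cast; rfl
  have e3 : Complex.exp (-(x : ℂ) ^ 2 / (4 * ((s / 2 : ℝ) : ℂ)))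
      = ((exp (-(x ^ 2 / (2 * s))) : ℝ) : ℂ) := by
    push_cast; congr 1; field_simp; norm_num
  rw [e2, e3, ← Complex.ofReal_mul, Complex.ofReal_re, gauss1, ← mul_assoc]
  congr 1
  rw [show π / (s / 2) = (2 * π) ^ 2 / (2 * π * s) by field_simp,
    Real.sqrt_div (by positivity), Real.sqrt_sq (by positivity)]
  have : √(2 * π * s) ≠ 0 := by positivity
  field_simp

/-- Second-order Taylor bound for `1 - cos`, valid on all of `ℝ`. -/
lemma sq_half_sub_le (θ : ℝ) : θ ^ 2 / 2 - (1 - cos θ) ≤ θ ^ 4 / 2 := by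
  rcases le_or_gt |θ| 1 with h | h
  · have := (abs_le.1 (Real.cos_bound h)).2
    have e : |θ| ^ 4 = θ ^ 4 := by
      rw [show (4 : ℕ) = 2 * 2 by norm_num, pow_mul, sq_abs, ← pow_mul]
    rw [e] at this
    nlinarith [sq_nonneg (θ ^ 2)]
  · have h1 : 1 < θ ^ 2 := by rw [← sq_abs]; nlinarith
    have := Real.cos_le_one θ
    nlinarith

lemma mul_exp_neg_le_one (x : ℝ) : x * exp (-x) ≤ 1 := by
  have := Real.add_one_le_exp x
  rw [Real.exp_neg, ← div_eq_mul_inv, div_le_one (exp_pos x)]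
  linarith

/-- Comparison of the characteristic functions of the walk and of the Gaussian. The lower bound
`1 - cos θ ≥ 2 θ² / π²` leaves a Gaussian factor after one such factor absorbs `s θ²`. -/
lemma symbol_diff_le {s θ : ℝ} (hs : 0 < s) (h : |θ| ≤ π) :
    |exp (-(s * (1 - cos θ))) - exp (-(s / 2 * θ ^ 2))|
      ≤ π ^ 2 / 2 * (θ ^ 2 * exp (-(s / π ^ 2 * θ ^ 2))) := by
  have hp := Real.pi_pos
  have hu := Real.cos_le_one_sub_mul_cos_sq h
  have hv := Real.one_sub_sq_div_two_le_cos (x := θ)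
  have hw := sq_half_sub_le θ
  set u := 1 - cos θ with hu'
  have huv : s * u ≤ s / 2 * θ ^ 2 := by nlinarith
  rw [abs_of_nonneg (by rw [sub_nonneg]; exact exp_le_exp.2 (by linarith))]
  have e1 : exp (-(s / 2 * θ ^ 2)) = exp (-(s * u)) * exp (-(s * (θ ^ 2 / 2 - u))) := by
    rw [← exp_add]; congr 1; ring
  have e2 : 1 - exp (-(s * (θ ^ 2 / 2 - u))) ≤ s * (θ ^ 4 / 2) := by
    have := Real.add_one_le_exp (-(s * (θ ^ 2 / 2 - u)))
    nlinarith
  have e3 : exp (-(s * u)) ≤ exp (-(s / π ^ 2 * θ ^ 2)) * exp (-(s / π ^ 2 * θ ^ 2)) := by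
    rw [← exp_add]
    apply exp_le_exp.2
    have : 2 / π ^ 2 * θ ^ 2 ≤ u := by linarith
    have : s * (2 / π ^ 2 * θ ^ 2) ≤ s * u := by gcongr
    have e : s * (2 / π ^ 2 * θ ^ 2) = 2 * (s / π ^ 2 * θ ^ 2) := by ring
    linarith
  have e4 := mul_exp_neg_le_one (s / π ^ 2 * θ ^ 2)
  set E := exp (-(s / π ^ 2 * θ ^ 2))
  calc exp (-(s * u)) - exp (-(s / 2 * θ ^ 2))
      = exp (-(s * u)) * (1 - exp (-(s * (θ ^ 2 / 2 - u)))) := by rw [e1]; ring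
    _ ≤ (E * E) * (s * (θ ^ 4 / 2)) := by
        apply mul_le_mul e3 e2 _ (by positivity)
        rw [sub_nonneg]; exact exp_le_one_iff.2 (by nlinarith)
    _ = π ^ 2 / 2 * (θ ^ 2 * E) * (s / π ^ 2 * θ ^ 2 * E) := by field_simp
    _ ≤ π ^ 2 / 2 * (θ ^ 2 * E) * 1 := by gcongr
    _ = _ := by ring

lemma integrable_sq_mul_exp {a : ℝ} (ha : 0 < a) :
    Integrable (fun x : ℝ => x ^ 2 * exp (-(a * x ^ 2))) := by
  have := integrable_rpow_mul_exp_neg_mul_sq ha (s := 2) (by norm_num)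
  simpa using this

lemma integral_sq_mul_exp {a : ℝ} (ha : 0 < a) :
    ∫ x : ℝ, x ^ 2 * exp (-(a * x ^ 2)) =
      a⁻¹ * (√a)⁻¹ * ∫ x : ℝ, x ^ 2 * exp (-(1 * x ^ 2)) := by
  have h := Measure.integral_comp_mul_left (fun x : ℝ => x ^ 2 * exp (-(1 * x ^ 2))) (√a)
  have e : (fun x : ℝ => (√a * x) ^ 2 * exp (-(1 * (√a * x) ^ 2)))
      = fun x => a * (x ^ 2 * exp (-(a * x ^ 2))) := by
    ext x; rw [mul_pow, Real.sq_sqrt ha.le]; ring_nf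
  simp only [e] at h
  rw [integral_const_mul, abs_of_nonneg (by positivity), smul_eq_mul] at h
  rw [mul_assoc, ← h, inv_mul_cancel_left₀ ha.ne']

/-- One-dimensional local limit theorem with the error of the next order, uniformly in the site. -/
lemma heat1_sub_gauss1 : ∃ C : ℝ, 0 < C ∧ ∀ s : ℝ, 0 < s → ∀ n : ℤ,
    |heat1 s n - gauss1 s n| ≤ C * (√s)⁻¹ * s⁻¹ := by
  have hp := Real.pi_pos
  set K := ∫ x : ℝ, x ^ 2 * exp (-(1 * x ^ 2)) with hK
  have hK0 : 0 ≤ K := integral_nonneg fun x => by positivity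
  refine ⟨(2 * π)⁻¹ * (π ^ 2 / 2) * (π ^ 2 * π * K) + 1, by positivity, fun s hs n => ?_⟩
  rw [gauss1_eq_integral hs, heat1, ← mul_sub, abs_mul, abs_of_pos (by positivity : 0 < (2 * π)⁻¹)]
  rw [← integral_indicator measurableSet_Ioc]
  have hG : Integrable (fun θ : ℝ => exp (-(s / 2 * θ ^ 2)) * cos (n * θ)) := by
    have := integrable_exp_neg_mul_sq (b := s / 2) (by positivity)
    refine this.mono (by fun_prop) (ae_of_all _ fun θ => ?_)
    rw [norm_mul]
    simp only [neg_mul]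
    exact mul_le_of_le_one_right (norm_nonneg _) (by simpa using abs_cos_le_one _)
  have hH : Integrable (Set.indicator (Set.Ioc (-π) π)
      fun θ : ℝ => exp (-(s * (1 - cos θ))) * cos (n * θ)) := by
    rw [integrable_indicator_iff measurableSet_Ioc]
    exact (Continuous.integrableOn_Icc (by fun_prop)).mono_set Set.Ioc_subset_Icc_self
  rw [← integral_sub hH hG]
  have hbd : |∫ θ : ℝ, (Set.indicator (Set.Ioc (-π) π)
      (fun θ : ℝ => exp (-(s * (1 - cos θ))) * cos (n * θ)) θ
        - exp (-(s / 2 * θ ^ 2)) * cos (n * θ))|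
      ≤ ∫ θ : ℝ, π ^ 2 / 2 * (θ ^ 2 * exp (-(s / π ^ 2 * θ ^ 2))) := by
    rw [← Real.norm_eq_abs]
    refine norm_integral_le_of_norm_le ((integrable_sq_mul_exp (by positivity)).const_mul _)
      (ae_of_all _ fun θ => ?_)
    rw [Real.norm_eq_abs]
    by_cases hθ : θ ∈ Set.Ioc (-π) π
    · rw [Set.indicator_of_mem hθ, ← sub_mul, abs_mul]
      have := symbol_diff_le hs (abs_le.2 ⟨hθ.1.le, hθ.2⟩)
      exact (mul_le_of_le_one_right (abs_nonneg _) (abs_cos_le_one _)).trans this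
    · rw [Set.indicator_of_notMem hθ, zero_sub, abs_neg, abs_mul]
      have h3 : 3 < π := Real.pi_gt_three
      have hge : 1 ≤ θ ^ 2 := by
        rw [Set.mem_Ioc, not_and_or, not_lt, not_le] at hθ
        rcases hθ with h | h <;> nlinarith
      refine (mul_le_of_le_one_right (abs_nonneg _) (abs_cos_le_one _)).trans ?_
      rw [abs_of_pos (exp_pos _)]
      have h1 : exp (-(s / 2 * θ ^ 2)) ≤ exp (-(s / π ^ 2 * θ ^ 2)) := by
        apply exp_le_exp.2; apply neg_le_neg; gcongr; nlinarith
      have h2 : 1 ≤ π ^ 2 / 2 * θ ^ 2 := by nlinarith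
      calc _ ≤ 1 * exp (-(s / π ^ 2 * θ ^ 2)) := by rw [one_mul]; exact h1
        _ ≤ π ^ 2 / 2 * θ ^ 2 * exp (-(s / π ^ 2 * θ ^ 2)) := by gcongr
        _ = _ := by ring
  rw [integral_const_mul, integral_sq_mul_exp (by positivity), ← hK, inv_div,
    Real.sqrt_div hs.le, Real.sqrt_sq hp.le, inv_div] at hbd
  calc _ ≤ (2 * π)⁻¹ * (π ^ 2 / 2 * (π ^ 2 / s * (π / √s) * K)) := by gcongr
    _ = ((2 * π)⁻¹ * (π ^ 2 / 2) * (π ^ 2 * π * K)) * (√s)⁻¹ * s⁻¹ := by ring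
    _ ≤ _ := by gcongr; linarith

lemma heat1_le : ∃ C : ℝ, 0 < C ∧ ∀ s : ℝ, 0 < s → ∀ n : ℤ, |heat1 s n| ≤ C * (√s)⁻¹ := by
  have hp := Real.pi_pos
  refine ⟨(2 * π)⁻¹ * √(π / (2 / π ^ 2)), by positivity, fun s hs n => ?_⟩
  have hi := integrable_exp_neg_mul_sq (b := 2 / π ^ 2 * s) (by positivity)
  have hbd : ‖∫ θ in Set.Ioc (-π) π, exp (-(s * (1 - cos θ))) * cos (n * θ)‖
      ≤ ∫ θ in Set.Ioc (-π) π, exp (-(2 / π ^ 2 * s) * θ ^ 2) := by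
    refine norm_integral_le_of_norm_le hi.integrableOn ?_
    filter_upwards [ae_restrict_mem measurableSet_Ioc] with θ hθ
    rw [norm_mul]
    refine (mul_le_of_le_one_right (norm_nonneg _) (by simpa using abs_cos_le_one _)).trans ?_
    rw [Real.norm_of_nonneg (exp_pos _).le]
    apply exp_le_exp.2
    have hu := Real.cos_le_one_sub_mul_cos_sq (abs_le.2 ⟨hθ.1.le, hθ.2⟩)
    have : s * (2 / π ^ 2 * θ ^ 2) ≤ s * (1 - cos θ) := by gcongr; linarith
    linarith
  have h2 := hbd.trans (setIntegral_le_integral hi (ae_of_all _ fun θ => (exp_pos _).le))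
  rw [integral_gaussian, ← div_div, Real.sqrt_div (by positivity)] at h2
  rw [heat1, abs_mul, abs_of_pos (by positivity : 0 < (2 * π)⁻¹), mul_assoc]
  gcongr
  exact h2

lemma gauss1_nonneg (s x : ℝ) : 0 ≤ gauss1 s x := by unfold gauss1; positivity

lemma gauss1_le {s : ℝ} (hs : 0 < s) (x : ℝ) : gauss1 s x ≤ (√s)⁻¹ := by
  have h3 : 3 < π := Real.pi_gt_three
  have hs' := Real.sqrt_pos.2 hs
  have h1 : √s ≤ √(2 * π * s) := Real.sqrt_le_sqrt (by nlinarith)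
  calc gauss1 s x ≤ (√(2 * π * s))⁻¹ * 1 := by
        unfold gauss1; gcongr; exact exp_le_one_iff.2 (neg_nonpos.2 (by positivity))
    _ ≤ _ := by rw [mul_one]; gcongr

lemma abs_prod_sub_prod_le {ι : Type*} (S : Finset ι) (a b : ι → ℝ) (A ρ : ℝ) (hA : 0 ≤ A)
    (ha : ∀ i, |a i| ≤ A) (hb : ∀ i, |b i| ≤ A) (hab : ∀ i, |a i - b i| ≤ A * ρ) :
    |∏ i ∈ S, a i - ∏ i ∈ S, b i| ≤ S.card * A ^ S.card * ρ := by
  classical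
  induction S using Finset.induction_on with
  | empty => simp
  | insert i S hi ih =>
    rw [Finset.prod_insert hi, Finset.prod_insert hi, Finset.card_insert_of_notMem hi]
    have h1 : |∏ i ∈ S, b i| ≤ A ^ S.card := by
      rw [Finset.abs_prod, ← Finset.prod_const]
      exact Finset.prod_le_prod (fun _ _ => abs_nonneg _) fun j _ => hb j
    have h2 : a i * ∏ i ∈ S, a i - b i * ∏ i ∈ S, b i
        = a i * (∏ i ∈ S, a i - ∏ i ∈ S, b i) + (a i - b i) * ∏ i ∈ S, b i := by ring
    rw [h2]
    refine (abs_add_le _ _).trans ?_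
    rw [abs_mul, abs_mul]
    calc _ ≤ A * (S.card * A ^ S.card * ρ) + (A * ρ) * A ^ S.card := by
          gcongr
          · exact ha i
          · exact (abs_nonneg _).trans (hab i)
          · exact hab i
      _ = _ := by push_cast; ring

/-- The `d`-dimensional local limit theorem for products of one-dimensional kernels. -/
lemma prod_heat1_bounds (d : ℕ) : ∃ C : ℝ, 0 < C ∧ ∀ s : ℝ, 0 < s → ∀ z : Fin d → ℤ,
    |∏ i, heat1 s (z i)| ≤ C * s ^ (-(d : ℝ) / 2) ∧
    |∏ i, heat1 s (z i) - ∏ i, gauss1 s (z i)| ≤ C * s ^ (-(d : ℝ) / 2 - 1) := by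
  obtain ⟨C1, hC1, h1⟩ := heat1_sub_gauss1
  obtain ⟨C2, hC2, h2⟩ := heat1_le
  set A := C1 + C2 + 1 with hA
  refine ⟨A ^ d + d * A ^ d, by positivity, fun s hs z => ?_⟩
  have hs' := Real.sqrt_pos.2 hs
  have e0 : ((√s)⁻¹) ^ d = s ^ (-(d : ℝ) / 2) := by
    rw [Real.sqrt_eq_rpow, ← Real.rpow_neg hs.le, ← Real.rpow_natCast, ← Real.rpow_mul hs.le]
    congr 1; ring
  have e1 : s ^ (-(d : ℝ) / 2 - 1) = s ^ (-(d : ℝ) / 2) * s⁻¹ := by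
    rw [Real.rpow_sub hs, Real.rpow_one, div_eq_mul_inv]
  have ha : ∀ i, |heat1 s (z i)| ≤ A * (√s)⁻¹ := fun i =>
    (h2 s hs _).trans (by gcongr; linarith)
  have hb : ∀ i, |gauss1 s (z i)| ≤ A * (√s)⁻¹ := fun i => by
    rw [abs_of_nonneg (gauss1_nonneg _ _)]
    refine (gauss1_le hs _).trans (le_mul_of_one_le_left (by positivity) (by linarith))
  have hab : ∀ i, |heat1 s (z i) - gauss1 s (z i)| ≤ A * (√s)⁻¹ * s⁻¹ := fun i =>
    (h1 s hs _).trans (by gcongr; linarith)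
  constructor
  · rw [Finset.abs_prod]
    calc _ ≤ ∏ i : Fin d, (A * (√s)⁻¹) :=
          Finset.prod_le_prod (fun _ _ => abs_nonneg _) fun j _ => ha j
      _ = A ^ d * s ^ (-(d : ℝ) / 2) := by
          rw [Finset.prod_const, Finset.card_univ, Fintype.card_fin, mul_pow, e0]
      _ ≤ _ := by gcongr; exact le_add_of_nonneg_right (by positivity)
  · have := abs_prod_sub_prod_le Finset.univ _ _ _ _ (by positivity) ha hb hab
    rw [Finset.card_univ, Fintype.card_fin, mul_pow, e0] at this
    rw [e1]
    refine this.trans ?_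
    calc _ = (d * A ^ d) * (s ^ (-(d : ℝ) / 2) * s⁻¹) := by ring
      _ ≤ _ := by gcongr; exact le_add_of_nonneg_left (by positivity)

/-! ### The simple random walk: Chernoff bound, Fourier inversion, Poissonization -/

/-- Transition probabilities of the simple random walk as real numbers. -/
def srwR (d k : ℕ) (z : Fin d → ℤ) : ℝ := (srwP d k z).toReal

lemma srwP_ne_top {d : ℕ} (hd : 0 < d) (k : ℕ) (z : Fin d → ℤ) : srwP d k z ≠ ⊤ := by
  induction k generalizing z with
  | zero => rw [srwP]; split_ifs <;> simp
  | succ k ih =>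
    rw [srwP]
    refine ENNReal.mul_ne_top ?_ ?_
    · simp [hd.ne']
    · exact ENNReal.sum_ne_top.2 fun i _ => ENNReal.add_ne_top.2 ⟨ih _, ih _⟩

lemma srwR_nonneg (d k : ℕ) (z : Fin d → ℤ) : 0 ≤ srwR d k z := ENNReal.toReal_nonneg

lemma srwR_zero (d : ℕ) (z : Fin d → ℤ) : srwR d 0 z = if z = 0 then 1 else 0 := by
  rw [srwR, srwP]; split_ifs <;> simp

lemma srwR_succ {d : ℕ} (hd : 0 < d) (k : ℕ) (z : Fin d → ℤ) :
    srwR d (k + 1) z = (2 * d : ℝ)⁻¹ *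
      ∑ i : Fin d, (srwR d k (z - Pi.single i 1) + srwR d k (z + Pi.single i 1)) := by
  rw [srwR, srwP, ENNReal.toReal_mul, ENNReal.toReal_sum]
  · congr 1
    · simp
    · refine Finset.sum_congr rfl fun i _ => ?_
      rw [ENNReal.toReal_add (srwP_ne_top hd _ _) (srwP_ne_top hd _ _)]; rfl
  · exact fun i _ => ENNReal.add_ne_top.2 ⟨srwP_ne_top hd _ _, srwP_ne_top hd _ _⟩

/-- Chernoff bound in the direction of one coordinate. -/
lemma srwR_chernoff {d : ℕ} (i : Fin d) (l : ℝ) (k : ℕ) (z : Fin d → ℤ) :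
    srwR d k z ≤ exp (-(l * z i)) * (1 + (cosh l - 1) / d) ^ k := by
  have hd : 0 < d := i.pos
  have hd' : (0 : ℝ) < d := by exact_mod_cast hd
  induction k generalizing z with
  | zero =>
    rw [srwR_zero]
    split_ifs with h
    · simp [h]
    · positivity
  | succ k ih =>
    rw [srwR_succ hd]
    set M := 1 + (cosh l - 1) / d with hM
    have hterm : ∀ j : Fin d, srwR d k (z - Pi.single j 1) + srwR d k (z + Pi.single j 1)
        ≤ exp (-(l * z i)) * M ^ k * (if j = i then 2 * cosh l else 2) := by
      intro j
      have h1 := ih (z - Pi.single j 1)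
      have h2 := ih (z + Pi.single j 1)
      split_ifs with hj
      · subst hj
        have e1 : exp (-(l * ((z - Pi.single j 1 : Fin d → ℤ) j : ℤ))) = exp (-(l * z j)) * exp l := by
          rw [← exp_add]; congr 1; simp; ring
        have e2 : exp (-(l * ((z + Pi.single j 1 : Fin d → ℤ) j : ℤ))) = exp (-(l * z j)) * exp (-l) := by
          rw [← exp_add]; congr 1; simp; ring
        rw [e1] at h1; rw [e2] at h2
        rw [cosh_eq]
        linarith
      · have hj' : i ≠ j := fun h => hj h.symm
        have e1 : (z - Pi.single j 1 : Fin d → ℤ) i = z i := by simp [hj']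
        have e2 : (z + Pi.single j 1 : Fin d → ℤ) i = z i := by simp [hj']
        rw [e1] at h1; rw [e2] at h2
        linarith
    have hsum : ∑ j : Fin d, (if j = i then 2 * cosh l else 2) = 2 * d * M := by
      have : ∀ j : Fin d, (if j = i then 2 * cosh l else 2)
          = 2 + (if j = i then 2 * cosh l - 2 else 0) := by
        intro j; split_ifs <;> ring
      simp only [this]
      rw [Finset.sum_add_distrib, Finset.sum_ite_eq' ]
      simp [hM]
      field_simp
    calc _ ≤ (2 * d : ℝ)⁻¹ * ∑ j : Fin d, exp (-(l * z i)) * M ^ k *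
          (if j = i then 2 * cosh l else 2) := by
          gcongr with j _; exact hterm j
      _ = _ := by
        rw [← Finset.mul_sum, hsum, pow_succ]; field_simp

/-- Lebesgue measure on the cube `(-π, π]^d`. -/
def cubeMeasure (d : ℕ) : Measure (Fin d → ℝ) :=
  Measure.pi fun _ => volume.restrict (Set.Ioc (-π) π)

instance (d : ℕ) : IsFiniteMeasure (cubeMeasure d) := by
  unfold cubeMeasure
  have : IsFiniteMeasure (volume.restrict (Set.Ioc (-π) π) : Measure ℝ) :=
    ⟨by simp⟩
  infer_instance

lemma integral_cos_int (n : ℤ) :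
    ∫ θ in Set.Ioc (-π) π, cos (n * θ) = if n = 0 then 2 * π else 0 := by
  rw [← intervalIntegral.integral_of_le (by linarith [Real.pi_pos])]
  split_ifs with h
  · subst h; simp; ring
  · have hn : (n : ℝ) ≠ 0 := by exact_mod_cast h
    rw [intervalIntegral.integral_comp_mul_left _ hn, integral_cos]
    simp

/-- The characteristic function of one step of the simple random walk. -/
def stepChar (d : ℕ) (θ : Fin d → ℝ) : ℝ := (d : ℝ)⁻¹ * ∑ i, cos (θ i)

lemma continuous_stepChar (d : ℕ) : Continuous (stepChar d) := by
  unfold stepChar; fun_prop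

lemma abs_stepChar_le (d : ℕ) (θ : Fin d → ℝ) : |stepChar d θ| ≤ 1 := by
  unfold stepChar
  rw [abs_mul, abs_of_nonneg (by positivity)]
  have : |∑ i, cos (θ i)| ≤ ∑ i : Fin d, (1 : ℝ) :=
    (Finset.abs_sum_le_sum_abs _ _).trans (Finset.sum_le_sum fun i _ => abs_cos_le_one _)
  rw [Finset.sum_const, Finset.card_univ, Fintype.card_fin, nsmul_eq_mul, mul_one] at this
  calc _ ≤ (d : ℝ)⁻¹ * d := by gcongr
    _ ≤ 1 := inv_mul_le_one

lemma abs_prod_cos_le {d : ℕ} (z : Fin d → ℤ) (θ : Fin d → ℝ) : |∏ i, cos (z i * θ i)| ≤ 1 := by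
  rw [Finset.abs_prod]
  exact Finset.prod_le_one (fun _ _ => abs_nonneg _) fun i _ => abs_cos_le_one _

lemma prod_cos_shift {d : ℕ} (z : Fin d → ℤ) (θ : Fin d → ℝ) (j : Fin d) :
    ∏ i, cos (((z - Pi.single j 1 : Fin d → ℤ) i : ℤ) * θ i)
      + ∏ i, cos (((z + Pi.single j 1 : Fin d → ℤ) i : ℤ) * θ i)
      = 2 * cos (θ j) * ∏ i, cos (z i * θ i) := by
  have key : ∀ w : Fin d → ℤ, ∏ i, cos (w i * θ i)
      = cos (w j * θ j) * ∏ i ∈ Finset.univ.erase j, cos (w i * θ i) := fun w =>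
    (Finset.mul_prod_erase Finset.univ (fun i => cos (w i * θ i)) (Finset.mem_univ j)).symm
  rw [key (z - Pi.single j 1), key (z + Pi.single j 1), key z]
  have h1 : ∏ i ∈ Finset.univ.erase j, cos (((z - Pi.single j 1 : Fin d → ℤ) i : ℤ) * θ i)
      = ∏ i ∈ Finset.univ.erase j, cos (z i * θ i) :=
    Finset.prod_congr rfl fun i hi => by simp [Finset.ne_of_mem_erase hi]
  have h2 : ∏ i ∈ Finset.univ.erase j, cos (((z + Pi.single j 1 : Fin d → ℤ) i : ℤ) * θ i)
      = ∏ i ∈ Finset.univ.erase j, cos (z i * θ i) :=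
    Finset.prod_congr rfl fun i hi => by simp [Finset.ne_of_mem_erase hi]
  rw [h1, h2, ← add_mul, ← mul_assoc]
  congr 1
  simp only [Pi.sub_apply, Pi.add_apply, Pi.single_eq_same, Int.cast_sub, Int.cast_add,
    Int.cast_one, sub_mul, add_mul, one_mul, cos_sub, cos_add]
  ring

lemma integrable_cube {d : ℕ} {f : (Fin d → ℝ) → ℝ} (hf : Continuous f) {C : ℝ}
    (hC : ∀ θ, |f θ| ≤ C) : Integrable f (cubeMeasure d) :=
  Integrable.of_bound hf.aestronglyMeasurable C (ae_of_all _ hC)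

lemma integrable_fourier {d : ℕ} (k : ℕ) (z : Fin d → ℤ) :
    Integrable (fun θ => stepChar d θ ^ k * ∏ i, cos (z i * θ i)) (cubeMeasure d) := by
  have := continuous_stepChar d
  refine integrable_cube (by fun_prop) (C := 1) fun θ => ?_
  rw [abs_mul, abs_pow]
  exact mul_le_one₀ (pow_le_one₀ (abs_nonneg _) (abs_stepChar_le d θ)) (abs_nonneg _)
    (abs_prod_cos_le z θ)

/-- Fourier inversion for the simple random walk. The cosine form follows from the
recursion because shifting one coordinate of the product of cosines by `±1` and averaging
multiplies it by the cosine of that frequency. -/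
lemma srwR_fourier {d : ℕ} (hd : 0 < d) (k : ℕ) (z : Fin d → ℤ) :
    srwR d k z = ((2 * π)⁻¹) ^ d *
      ∫ θ, stepChar d θ ^ k * ∏ i, cos (z i * θ i) ∂(cubeMeasure d) := by
  have hp := Real.pi_pos
  induction k generalizing z with
  | zero =>
    simp only [pow_zero, one_mul]
    rw [cubeMeasure, integral_fintype_prod_eq_prod (fun i (x : ℝ) => cos (z i * x)), srwR_zero]
    simp only [integral_cos_int]
    split_ifs with h
    · have : (2 * π) ≠ 0 := by positivity
      simp only [h, Pi.zero_apply, if_true, Finset.prod_const, Finset.card_univ, Fintype.card_fin]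
      rw [← mul_pow, inv_mul_cancel₀ this, one_pow]
    · obtain ⟨i, hi⟩ := Function.ne_iff.1 h
      rw [Finset.prod_eq_zero (Finset.mem_univ i), mul_zero]
      simpa using hi
  | succ k ih =>
    rw [srwR_succ hd]
    simp only [ih]
    simp only [← mul_add]
    rw [← Finset.mul_sum, mul_left_comm]
    congr 1
    simp only [← integral_add (integrable_fourier k _) (integrable_fourier k _)]
    rw [← integral_finsetSum, ← integral_const_mul]
    swap
    · exact fun i _ => (integrable_fourier k _).add (integrable_fourier k _)
    congr 1; ext θ
    simp only [← mul_add, prod_cos_shift]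
    rw [← Finset.mul_sum, ← Finset.sum_mul, ← Finset.mul_sum, pow_succ]
    have : (d : ℝ) ≠ 0 := by positivity
    conv_rhs => rw [show stepChar d θ ^ k * stepChar d θ = stepChar d θ ^ k *
      ((d : ℝ)⁻¹ * ∑ i, cos (θ i)) from rfl]
    field_simp

/-- The transition probability at time `t` of the simple random walk in continuous time, i.e.
run at the jump times of a rate-one Poisson process. -/
def ctP (d : ℕ) (t : ℝ) (z : Fin d → ℤ) : ENNReal :=
  ∑' k : ℕ, ENNReal.ofReal (exp (-t) * t ^ k / k.factorial) * srwP d k z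

/-- In continuous time the coordinates of the walk are independent. -/
lemma hasSum_prod_heat1 {d : ℕ} (hd : 0 < d) {t : ℝ} (ht : 0 ≤ t) (z : Fin d → ℤ) :
    HasSum (fun k : ℕ => exp (-t) * t ^ k / k.factorial * srwR d k z)
      (∏ i, heat1 (t / d) (z i)) := by
  have hd' : (d : ℝ) ≠ 0 := by positivity
  have hc := continuous_stepChar d
  have hprod : ∏ i, heat1 (t / d) (z i) = ((2 * π)⁻¹) ^ d *
      ∫ θ, exp (-t) * exp (t * stepChar d θ) * ∏ i, cos (z i * θ i) ∂(cubeMeasure d) := by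
    simp only [heat1]
    rw [Finset.prod_mul_distrib, Finset.prod_const, Finset.card_univ, Fintype.card_fin,
      ← integral_fintype_prod_eq_prod (fun i (x : ℝ) => exp (-(t / d * (1 - cos x))) * cos (z i * x))]
    congr 1
    refine integral_congr_ae (ae_of_all _ fun θ => ?_)
    simp only
    rw [Finset.prod_mul_distrib, ← exp_sum, ← exp_add]
    congr 2
    rw [Finset.sum_neg_distrib, ← Finset.mul_sum, Finset.sum_sub_distrib]
    simp [stepChar]
    field_simp
    ring
  rw [hprod]
  have hF : ∀ k : ℕ, exp (-t) * t ^ k / k.factorial * srwR d k z = ((2 * π)⁻¹) ^ d *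
      ∫ θ, exp (-t) * t ^ k / k.factorial * (stepChar d θ ^ k * ∏ i, cos (z i * θ i))
        ∂(cubeMeasure d) := by
    intro k
    rw [integral_const_mul, srwR_fourier hd]; ring
  simp only [hF]
  apply HasSum.mul_left
  have hexp : ∀ x : ℝ, HasSum (fun k : ℕ => x ^ k / (k.factorial : ℝ)) (exp x) := fun x => by
    rw [Real.exp_eq_exp_ℝ]; exact NormedSpace.expSeries_div_hasSum_exp x
  refine hasSum_integral_of_dominated_convergence
    (fun k _ => exp (-t) * (t ^ k / k.factorial)) ?_ ?_ ?_ ?_ ?_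
  · intro k
    exact ((integrable_fourier k z).const_mul _).aestronglyMeasurable
  · intro k
    refine ae_of_all _ fun θ => ?_
    rw [norm_mul, Real.norm_of_nonneg (by positivity), mul_div_assoc]
    refine mul_le_of_le_one_right (by positivity) ?_
    rw [Real.norm_eq_abs, abs_mul, abs_pow]
    exact mul_le_one₀ (pow_le_one₀ (abs_nonneg _) (abs_stepChar_le d θ)) (abs_nonneg _)
      (abs_prod_cos_le z θ)
  · exact ae_of_all _ fun _ => (hexp t).summable.mul_left _
  · exact integrable_const _
  · refine ae_of_all _ fun θ => ?_
    have := ((hexp (t * stepChar d θ)).mul_left (exp (-t))).mul_right (∏ i, cos (z i * θ i))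
    refine this.congr_fun fun k => ?_
    rw [mul_pow]; ring

lemma prod_heat1_nonneg {d : ℕ} (hd : 0 < d) {t : ℝ} (ht : 0 ≤ t) (z : Fin d → ℤ) :
    0 ≤ ∏ i, heat1 (t / d) (z i) :=
  (hasSum_prod_heat1 hd ht z).nonneg fun k => mul_nonneg (by positivity) (srwR_nonneg _ _ _)

lemma ctP_eq {d : ℕ} (hd : 0 < d) {t : ℝ} (ht : 0 ≤ t) (z : Fin d → ℤ) :
    ctP d t z = ENNReal.ofReal (∏ i, heat1 (t / d) (z i)) := by
  have h := hasSum_prod_heat1 hd ht z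
  rw [← h.tsum_eq, ENNReal.ofReal_tsum_of_nonneg
    (fun k => mul_nonneg (by positivity) (srwR_nonneg _ _ _)) h.summable, ctP]
  refine tsum_congr fun k => ?_
  rw [ENNReal.ofReal_mul (by positivity), srwR, ENNReal.ofReal_toReal (srwP_ne_top hd _ _)]

/-- Chernoff bound for the continuous-time walk in the direction of coordinate `i`. -/
lemma prod_heat1_chernoff {d : ℕ} (i : Fin d) (l : ℝ) {t : ℝ} (ht : 0 ≤ t) (z : Fin d → ℤ) :
    ∏ i, heat1 (t / d) (z i) ≤ exp (t * ((cosh l - 1) / d) - l * z i) := by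
  have h := hasSum_prod_heat1 i.pos ht z
  set M := 1 + (cosh l - 1) / d with hM
  have hexp : HasSum (fun k : ℕ => (t * M) ^ k / (k.factorial : ℝ)) (exp (t * M)) := by
    rw [Real.exp_eq_exp_ℝ]; exact NormedSpace.expSeries_div_hasSum_exp _
  have h2 := hexp.mul_left (exp (-t) * exp (-(l * z i)))
  have h3 := hasSum_le (fun k => ?_) h h2
  · refine h3.trans_eq ?_
    rw [← exp_add, ← exp_add, hM]; congr 1; ring
  · calc _ ≤ exp (-t) * t ^ k / k.factorial * (exp (-(l * z i)) * M ^ k) := by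
          gcongr; exact srwR_chernoff i l k z
      _ = _ := by rw [mul_pow]; ring

/-! ### Convolution powers of the Green's function -/

/-- Chapman–Kolmogorov equations. -/
lemma convE_srwP (d j k : ℕ) (z : Fin d → ℤ) :
    convE d (srwP d j) (srwP d k) z = srwP d (j + k) z := by
  induction j generalizing z with
  | zero =>
    rw [convE, tsum_eq_single 0]
    · simp [srwP]
    · intro x hx; simp [srwP, hx]
  | succ j ih =>
    have h1 : ∀ (v : Fin d → ℤ), ∑' x, srwP d j (x - v) * srwP d k (z - x)
        = srwP d (j + k) (z - v) := by
      intro v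
      rw [← ih, convE, ← (Equiv.addRight v).tsum_eq]
      refine tsum_congr fun x => ?_
      simp only [Equiv.coe_addRight, add_sub_cancel_right]
      congr 2; abel
    have h2 : ∀ (v : Fin d → ℤ), ∑' x, srwP d j (x + v) * srwP d k (z - x)
        = srwP d (j + k) (z + v) := by
      intro v
      simpa using h1 (-v)
    rw [show j + 1 + k = (j + k) + 1 by ring, convE, srwP]
    simp only [← h1, ← h2]
    simp only [srwP, mul_assoc]
    rw [ENNReal.tsum_mul_left]
    congr 1
    simp only [Finset.sum_mul, add_mul]
    rw [Summable.tsum_finsetSum fun _ _ => ENNReal.summable]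
    refine Finset.sum_congr rfl fun i _ => ?_
    rw [ENNReal.tsum_add]

/-- The `(j+1)`-fold convolution power of the Green's function, as a series in the transition
probabilities; the binomial weight counts the ways of cutting a path of length `n` into `j+1`
consecutive pieces. -/
def greenPow (d j : ℕ) (z : Fin d → ℤ) : ENNReal :=
  ∑' n : ℕ, ((n + j).choose j : ENNReal) * srwP d n z

lemma greenPow_zero (d : ℕ) : greenPow d 0 = green d := by
  ext z; simp [greenPow, green]

lemma convE_greenPow (d j : ℕ) (z : Fin d → ℤ) :
    convE d (greenPow d j) (green d) z = greenPow d (j + 1) z := by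
  have h1 : convE d (greenPow d j) (green d) z
      = ∑' a : ℕ, ∑' b : ℕ, ((a + j).choose j : ENNReal) * srwP d (a + b) z := by
    simp only [convE, greenPow, green]
    simp only [← ENNReal.tsum_mul_right]
    rw [ENNReal.tsum_comm]
    refine tsum_congr fun a => ?_
    simp only [← ENNReal.tsum_mul_left]
    rw [ENNReal.tsum_comm]
    refine tsum_congr fun b => ?_
    rw [← convE_srwP, convE, ← ENNReal.tsum_mul_left]
    exact tsum_congr fun x => mul_assoc _ _ _
  rw [h1, ← ENNReal.tsum_prod (f := fun a b => ((a + j).choose j : ENNReal) * srwP d (a + b) z),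
    ← Equiv.tsum_eq (Finset.HasAntidiagonal.sigmaAntidiagonalEquivProd (A := ℕ)), ENNReal.tsum_sigma', greenPow]
  refine tsum_congr fun n => ?_
  rw [tsum_fintype, show n + (j + 1) = n + j + 1 by ring, ← Nat.sum_range_add_choose,
    Nat.cast_sum, Finset.sum_mul,
    ← Finset.Nat.sum_antidiagonal_eq_sum_range_succ_mk
      (fun ab : ℕ × ℕ => ((ab.1 + j).choose j : ENNReal) * srwP d n z),
    ← Finset.sum_coe_sort (Finset.HasAntidiagonal.antidiagonal n)]
  refine Finset.sum_congr rfl fun x _ => ?_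
  have := Finset.HasAntidiagonal.mem_antidiagonal.1 x.2
  simp only [Finset.HasAntidiagonal.sigmaAntidiagonalEquivProd_apply]
  rw [this]

/-- The time integral turning Poisson weights into the binomial weights of `greenPow`. -/
lemma lintegral_weight (j k : ℕ) :
    ∫⁻ t in Set.Ioi (0 : ℝ), ENNReal.ofReal (t ^ j / j.factorial) *
      ENNReal.ofReal (exp (-t) * t ^ k / k.factorial) = ((k + j).choose j : ENNReal) := by
  have hpos : (0 : ℝ) < (k + j : ℕ) + 1 := by positivity
  have hc := Real.GammaIntegral_convergent hpos
  have hg := Real.Gamma_eq_integral hpos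
  rw [Real.Gamma_nat_eq_factorial] at hg
  simp only [add_sub_cancel_right, Real.rpow_natCast] at hc hg
  have e : ∀ t ∈ Set.Ioi (0 : ℝ), ENNReal.ofReal (t ^ j / j.factorial) *
      ENNReal.ofReal (exp (-t) * t ^ k / k.factorial)
      = ENNReal.ofReal (((j.factorial : ℝ) * k.factorial)⁻¹ * (exp (-t) * t ^ (k + j))) := by
    intro t ht
    have ht' : (0 : ℝ) < t := ht
    rw [← ENNReal.ofReal_mul (by positivity), pow_add]
    congr 1; field_simp
  rw [setLIntegral_congr_fun measurableSet_Ioi e, ← ofReal_integral_eq_lintegral_ofReal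
    (hc.const_mul _), integral_const_mul, ← hg]
  · rw [← ENNReal.ofReal_natCast, Nat.cast_choose ℝ (Nat.le_add_left j k)]
    congr 1
    rw [Nat.add_sub_cancel]
    field_simp
  · filter_upwards [ae_restrict_mem measurableSet_Ioi] with t ht
    have ht' : (0 : ℝ) < t := ht
    simp only [Pi.zero_apply]; positivity

lemma measurable_ctP (d : ℕ) (z : Fin d → ℤ) : Measurable fun t => ctP d t z := by
  unfold ctP
  exact Measurable.tsum fun k => by fun_prop

lemma greenPow_eq_lintegral (d j : ℕ) (z : Fin d → ℤ) :
    greenPow d j z = ∫⁻ t in Set.Ioi (0 : ℝ), ENNReal.ofReal (t ^ j / j.factorial) * ctP d t z := by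
  simp only [ctP, ← ENNReal.tsum_mul_left]
  rw [lintegral_tsum fun k => by fun_prop, greenPow]
  refine tsum_congr fun k => ?_
  simp only [← mul_assoc]
  rw [lintegral_mul_const _ (by fun_prop), lintegral_weight]

lemma aesm_prod_heat1 {d : ℕ} (hd : 0 < d) (z : Fin d → ℤ) :
    AEStronglyMeasurable (fun t : ℝ => ∏ i, heat1 (t / d) (z i))
      (volume.restrict (Set.Ioi 0)) := by
  refine ((measurable_ctP d z).ennreal_toReal.aestronglyMeasurable).congr ?_
  filter_upwards [ae_restrict_mem measurableSet_Ioi] with t ht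
  rw [ctP_eq hd (le_of_lt ht), ENNReal.toReal_ofReal (prod_heat1_nonneg hd (le_of_lt ht) z)]

/-- Integrability on `(0, ∞)` and a quantitative bound, from a constant bound up to time `T` and a
power bound afterwards. -/
lemma integral_Ioi_bound {f : ℝ → ℝ} {A B T a : ℝ}
    (hf : AEStronglyMeasurable f (volume.restrict (Set.Ioi 0))) (hT : 0 < T) (ha : a < -1)
    (h1 : ∀ t, 0 < t → t ≤ T → |f t| ≤ A) (h2 : ∀ t, T < t → |f t| ≤ B * t ^ a) :
    IntegrableOn f (Set.Ioi 0) ∧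
      |∫ t in Set.Ioi 0, f t| ≤ A * T + B * (T ^ (a + 1) / (-(a + 1))) := by
  have hu : Set.Ioi (0 : ℝ) = Set.Ioc 0 T ∪ Set.Ioi T := (Set.Ioc_union_Ioi_eq_Ioi hT.le).symm
  have hp := (integrableOn_Ioi_rpow_of_lt ha hT).const_mul B
  have hc : IntegrableOn (fun _ : ℝ => A) (Set.Ioc 0 T) := integrableOn_const (by simp)
  have b1 : ∀ᵐ t ∂(volume.restrict (Set.Ioc 0 T)), ‖f t‖ ≤ A := by
    filter_upwards [ae_restrict_mem measurableSet_Ioc] with t ht using h1 t ht.1 ht.2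
  have b2 : ∀ᵐ t ∂(volume.restrict (Set.Ioi T)), ‖f t‖ ≤ B * t ^ a := by
    filter_upwards [ae_restrict_mem measurableSet_Ioi] with t ht using h2 t ht
  have i1 : IntegrableOn f (Set.Ioc 0 T) :=
    Integrable.mono' hc (hf.mono_set (hu ▸ Set.subset_union_left)) b1
  have i2 : IntegrableOn f (Set.Ioi T) :=
    Integrable.mono' hp (hf.mono_set (hu ▸ Set.subset_union_right)) b2
  refine ⟨hu ▸ i1.union i2, ?_⟩
  rw [hu, setIntegral_union (Set.Ioc_disjoint_Ioi le_rfl) measurableSet_Ioi i1 i2]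
  refine (abs_add_le _ _).trans (add_le_add ?_ ?_)
  · have := norm_integral_le_of_norm_le hc b1
    rw [setIntegral_const, Measure.real, Real.volume_Ioc, sub_zero,
      ENNReal.toReal_ofReal hT.le, smul_eq_mul, mul_comm] at this
    exact this
  · have := norm_integral_le_of_norm_le hp b2
    rw [integral_const_mul, integral_Ioi_rpow_of_lt ha hT] at this
    rw [div_neg, ← neg_div]
    exact this

/-- The local limit estimates in terms of the time `t` of the `d`-dimensional walk, whose
coordinates move at speed `1 / d`. -/
lemma heat_bounds {d : ℕ} (hd : 0 < d) : ∃ C : ℝ, 0 < C ∧ ∀ t : ℝ, 0 < t → ∀ z : Fin d → ℤ,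
    |∏ i, heat1 (t / d) (z i)| ≤ C * t ^ (-(d : ℝ) / 2) ∧
    |∏ i, heat1 (t / d) (z i) - ∏ i, gauss1 (t / d) (z i)| ≤ C * t ^ (-(d : ℝ) / 2 - 1) := by
  obtain ⟨C, hC, h⟩ := prod_heat1_bounds d
  have hd' : (0 : ℝ) < d := by exact_mod_cast hd
  set C1 := C * ((d : ℝ) ^ (-(d : ℝ) / 2))⁻¹
  set C2 := C * ((d : ℝ) ^ (-(d : ℝ) / 2 - 1))⁻¹
  have p1 : 0 < C1 := by positivity
  have p2 : 0 < C2 := by positivity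
  refine ⟨C1 + C2, by positivity, fun t ht z => ?_⟩
  obtain ⟨h1, h2⟩ := h (t / d) (by positivity) z
  rw [Real.div_rpow ht.le hd'.le] at h1 h2
  constructor
  · calc _ ≤ _ := h1
      _ = C1 * t ^ (-(d : ℝ) / 2) := by ring
      _ ≤ _ := by gcongr; linarith
  · calc _ ≤ _ := h2
      _ = C2 * t ^ (-(d : ℝ) / 2 - 1) := by ring
      _ ≤ _ := by gcongr; linarith

lemma prod_heat1_le_one {d : ℕ} (hd : 0 < d) {t : ℝ} (ht : 0 ≤ t) (z : Fin d → ℤ) :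
    |∏ i, heat1 (t / d) (z i)| ≤ 1 := by
  rw [abs_of_nonneg (prod_heat1_nonneg hd ht z)]
  simpa using prod_heat1_chernoff ⟨0, hd⟩ 0 ht z

lemma integrableOn_heat {d j : ℕ} (hj : 2 * (j + 1) < d) (z : Fin d → ℤ) :
    IntegrableOn (fun t : ℝ => t ^ j * ∏ i, heat1 (t / d) (z i)) (Set.Ioi 0) := by
  have hd : 0 < d := by omega
  obtain ⟨C, hC, h⟩ := heat_bounds hd
  have hj' : 2 * ((j : ℝ) + 1) < d := by exact_mod_cast hj
  refine (integral_Ioi_bound (f := fun t : ℝ => t ^ j * ∏ i, heat1 (t / d) (z i)) (A := 1)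
    (B := C) (T := 1) (a := j + -(d : ℝ) / 2)
    (AEStronglyMeasurable.mul (by fun_prop) (aesm_prod_heat1 hd z)) one_pos (by linarith) ?_ ?_).1
  · intro t ht ht1
    rw [abs_mul, abs_of_nonneg (by positivity)]
    exact mul_le_one₀ (pow_le_one₀ ht.le ht1) (abs_nonneg _) (prod_heat1_le_one hd ht.le z)
  · intro t ht
    have ht0 : 0 < t := by linarith
    rw [abs_mul, abs_of_nonneg (by positivity), Real.rpow_add ht0, Real.rpow_natCast]
    calc _ ≤ t ^ j * (C * t ^ (-(d : ℝ) / 2)) := by gcongr; exact (h t ht0 z).1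
      _ = _ := by ring

lemma greenPow_eq_integral {d j : ℕ} (hj : 2 * (j + 1) < d) (z : Fin d → ℤ) :
    greenPow d j z = ENNReal.ofReal ((j.factorial : ℝ)⁻¹ *
      ∫ t in Set.Ioi (0 : ℝ), t ^ j * ∏ i, heat1 (t / d) (z i)) := by
  have hd : 0 < d := by omega
  rw [greenPow_eq_lintegral, ← integral_const_mul, ofReal_integral_eq_lintegral_ofReal
    ((integrableOn_heat hj z).const_mul _)]
  · refine setLIntegral_congr_fun measurableSet_Ioi fun t ht => ?_
    have ht' : (0 : ℝ) < t := ht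
    rw [ctP_eq hd ht'.le, ← ENNReal.ofReal_mul (by positivity)]
    congr 1; ring
  · filter_upwards [ae_restrict_mem measurableSet_Ioi] with t ht
    have ht' : (0 : ℝ) < t := ht
    have := prod_heat1_nonneg hd ht'.le z
    simp only [Pi.zero_apply]; positivity

lemma greenPow_ne_top {d j : ℕ} (hj : 2 * (j + 1) < d) (z : Fin d → ℤ) :
    greenPow d j z ≠ ⊤ := by
  rw [greenPow_eq_integral hj]; exact ENNReal.ofReal_ne_top

lemma greenPow_toReal {d j : ℕ} (hj : 2 * (j + 1) < d) (z : Fin d → ℤ) :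
    (greenPow d j z).toReal = (j.factorial : ℝ)⁻¹ *
      ∫ t in Set.Ioi (0 : ℝ), t ^ j * ∏ i, heat1 (t / d) (z i) := by
  have hd : 0 < d := by omega
  rw [greenPow_eq_integral hj, ENNReal.toReal_ofReal]
  refine mul_nonneg (by positivity) (setIntegral_nonneg measurableSet_Ioi fun t ht => ?_)
  have ht' : (0 : ℝ) < t := ht
  have := prod_heat1_nonneg hd ht'.le z
  positivity

/-! ### The convolution of `G` and `g` as a time integral -/

lemma nrmZ_eq_one_iff {d : ℕ} (e : Fin d → ℤ) :
    nrmZ d e = 1 ↔ ∃ i : Fin d, e = Pi.single i 1 ∨ e = -Pi.single i 1 := by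
  have h0 : nrmZ d e = 1 ↔ ∑ i, e i ^ 2 = 1 := by
    rw [nrmZ, Real.sqrt_eq_one]; norm_cast
  rw [h0]
  constructor
  · intro h
    obtain ⟨i, hi⟩ : ∃ i, e i ≠ 0 := by
      by_contra! hc
      simp [hc] at h
    rw [← Finset.add_sum_erase _ _ (Finset.mem_univ i)] at h
    have h1 : 0 < e i ^ 2 := by positivity
    have h2 : 0 ≤ ∑ j ∈ Finset.univ.erase i, e j ^ 2 := Finset.sum_nonneg fun j _ => sq_nonneg _
    have h3 : ∑ j ∈ Finset.univ.erase i, e j ^ 2 = 0 := by omega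
    have h4 : e i ^ 2 = 1 := by omega
    rw [Finset.sum_eq_zero_iff_of_nonneg fun j _ => sq_nonneg _] at h3
    have h5 : ∀ j, j ≠ i → e j = 0 := fun j hj => by
      simpa using h3 j (Finset.mem_erase.2 ⟨hj, Finset.mem_univ _⟩)
    refine ⟨i, (sq_eq_one_iff.1 h4).imp (fun h => ?_) fun h => ?_⟩ <;>
    · ext j
      by_cases hj : j = i
      · subst hj; simp [h]
      · simp [hj, h5 j hj]
  · rintro ⟨i, rfl | rfl⟩
    · simp [Pi.single_apply]
    · simp [Pi.single_apply]

lemma tsum_unit_vectors {d : ℕ} (F : (Fin d → ℤ) → ℝ) :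
    ∑' e : Fin d → ℤ, (if nrmZ d e = 1 then F e else 0)
      = ∑ i : Fin d, (F (-Pi.single i 1) + F (Pi.single i 1)) := by
  set v : Fin d × Bool → (Fin d → ℤ) :=
    fun p => if p.2 then Pi.single p.1 1 else -Pi.single p.1 1 with hv
  have hv1 : ∀ p, nrmZ d (v p) = 1 := by
    rintro ⟨i, b⟩
    rw [nrmZ_eq_one_iff]
    cases b
    · exact ⟨i, Or.inr (by simp [hv])⟩
    · exact ⟨i, Or.inl (by simp [hv])⟩
  have hinj : Function.Injective v := by
    rintro ⟨i, b⟩ ⟨j, c⟩ h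
    have hi := congrFun h i
    by_cases hij : i = j
    · subst hij
      cases b <;> cases c <;> simp [hv] at hi ⊢
    · cases b <;> cases c <;> simp [hv, hij] at hi
  rw [← hinj.tsum_eq]
  · rw [tsum_fintype, Fintype.sum_prod_type]
    refine Finset.sum_congr rfl fun i _ => ?_
    rw [Fintype.sum_bool, if_pos (hv1 _), if_pos (hv1 _), add_comm]
    simp [hv]
  · intro e he
    have : nrmZ d e = 1 := by
      by_contra hc
      simp [hc] at he
    obtain ⟨i, h | h⟩ := (nrmZ_eq_one_iff e).1 this
    · exact ⟨(i, true), by simp [hv, h]⟩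
    · exact ⟨(i, false), by simp [hv, h]⟩

/-- `g = δ₀ + P g`, where `P` averages over the nearest neighbours. -/
lemma green_recursion {d : ℕ} (hd : 2 < d) (z : Fin d → ℤ) :
    (green d z).toReal = (if z = 0 then 1 else 0) + 1 / (2 * (d : ℝ)) *
      ∑ i : Fin d, ((green d (z + -Pi.single i 1)).toReal + (green d (z + Pi.single i 1)).toReal) := by
  have hfin : ∀ z, green d z ≠ ⊤ := fun z => by
    rw [← greenPow_zero]; exact greenPow_ne_top (by omega) z
  have h : green d z = (if z = 0 then 1 else 0) + (2 * d : ENNReal)⁻¹ *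
      ∑ i : Fin d, (green d (z + -Pi.single i 1) + green d (z + Pi.single i 1)) := by
    conv_lhs => rw [green, tsum_eq_zero_add' ENNReal.summable]
    congr 1
    simp only [srwP]
    rw [ENNReal.tsum_mul_left, Summable.tsum_finsetSum fun _ _ => ENNReal.summable]
    congr 1
    refine Finset.sum_congr rfl fun i _ => ?_
    rw [ENNReal.tsum_add]; simp only [green, sub_eq_add_neg]
  have hsum : ∑ i : Fin d, (green d (z + -Pi.single i 1) + green d (z + Pi.single i 1)) ≠ ⊤ :=
    ENNReal.sum_ne_top.2 fun i _ => ENNReal.add_ne_top.2 ⟨hfin _, hfin _⟩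
  have hinv : (2 * d : ENNReal)⁻¹ ≠ ⊤ := by
    have : d ≠ 0 := by omega
    simp [this]
  rw [h, ENNReal.toReal_add (by split_ifs <;> simp) (ENNReal.mul_ne_top hinv hsum),
    ENNReal.toReal_mul, ENNReal.toReal_sum
      fun i _ => ENNReal.add_ne_top.2 ⟨hfin _, hfin _⟩]
  congr 1
  · split_ifs <;> simp
  · congr 1
    · simp
    · exact Finset.sum_congr rfl fun i _ => ENNReal.toReal_add (hfin _) (hfin _)

lemma Gfun_eq {d : ℕ} (hd : 2 < d) (σ2 : ℝ) (z : Fin d → ℤ) :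
    Gfun d σ2 z = σ2 / 2 * (greenPow d 1 z).toReal
      + (1 - σ2 / 2) * (2 * (greenPow d 0 z).toReal - (srwP d 0 z).toReal) := by
  have h1 : convE d (green d) (green d) z = greenPow d 1 z := by
    rw [← convE_greenPow, greenPow_zero]
  have h2 := green_recursion hd z
  rw [Gfun, h1, tsum_unit_vectors (fun e => (green d (z + e)).toReal), greenPow_zero]
  have h3 : (srwP d 0 z).toReal = if z = 0 then 1 else 0 := srwR_zero d z
  rw [h3, mul_assoc (1 - σ2 / 2) (1 / (2 * (d : ℝ)))]
  linear_combination (1 - σ2 / 2) * (-h2)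

lemma hasSum_convE {d : ℕ} {f h : (Fin d → ℤ) → ENNReal} {z : Fin d → ℤ}
    (hc : convE d f h z ≠ ⊤) :
    HasSum (fun x => (f x).toReal * (h (z - x)).toReal) (convE d f h z).toReal := by
  have := ENNReal.hasSum_toReal hc
  simpa only [convE, ENNReal.toReal_mul, ENNReal.tsum_toReal_eq (ENNReal.ne_top_of_tsum_ne_top hc)]
    using this

/-- The convolution `G ⋆ g` in terms of convolution powers of `g`. -/
lemma Ggconv_eq {d : ℕ} (hd : 6 < d) (σ2 : ℝ) (z : Fin d → ℤ) :
    Ggconv d σ2 z = σ2 / 2 * (greenPow d 2 z).toReal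
      + (1 - σ2 / 2) * (2 * (greenPow d 1 z).toReal - (greenPow d 0 z).toReal) := by
  have e2 : convE d (greenPow d 1) (green d) z = greenPow d 2 z := convE_greenPow d 1 z
  have e1 : convE d (greenPow d 0) (green d) z = greenPow d 1 z := convE_greenPow d 0 z
  have e0 : convE d (srwP d 0) (green d) z = greenPow d 0 z := by
    rw [greenPow_zero, convE, tsum_eq_single 0]
    · simp [srwP]
    · intro x hx; simp [srwP, hx]
  have h2 := hasSum_convE (e2 ▸ greenPow_ne_top (j := 2) (by omega) z)
  have h1 := hasSum_convE (e1 ▸ greenPow_ne_top (j := 1) (by omega) z)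
  have h0 := hasSum_convE (e0 ▸ greenPow_ne_top (j := 0) (by omega) z)
  rw [e2] at h2; rw [e1] at h1; rw [e0] at h0
  have h := (h2.mul_left (σ2 / 2)).add (((h1.mul_left 2).sub h0).mul_left (1 - σ2 / 2))
  rw [Ggconv, ← h.tsum_eq]
  refine tsum_congr fun x => ?_
  rw [Gfun_eq (by omega)]
  ring

/-- The polynomial weight of the integral representation of `G ⋆ g`. -/
def wt (σ2 t : ℝ) : ℝ := σ2 / 4 * t ^ 2 + (1 - σ2 / 2) * (2 * t - 1)

/-- `G ⋆ g` as a weighted time integral of the continuous-time heat kernel. -/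
lemma Ggconv_eq_integral {d : ℕ} (hd : 6 < d) (σ2 : ℝ) (z : Fin d → ℤ) :
    IntegrableOn (fun t => wt σ2 t * ∏ i, heat1 (t / d) (z i)) (Set.Ioi 0) ∧
    Ggconv d σ2 z = ∫ t in Set.Ioi (0 : ℝ), wt σ2 t * ∏ i, heat1 (t / d) (z i) := by
  have i2 := integrableOn_heat (d := d) (j := 2) (by omega) z
  have i1 := integrableOn_heat (d := d) (j := 1) (by omega) z
  have i0 := integrableOn_heat (d := d) (j := 0) (by omega) z
  have e : (fun t => wt σ2 t * ∏ i, heat1 (t / d) (z i)) = fun t : ℝ =>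
      σ2 / 4 * (t ^ 2 * ∏ i, heat1 (t / d) (z i)) +
      (1 - σ2 / 2) * (2 * (t ^ 1 * ∏ i, heat1 (t / d) (z i)) -
        t ^ 0 * ∏ i, heat1 (t / d) (z i)) := by
    ext t; rw [wt]; ring
  have j1 : IntegrableOn (fun t : ℝ => 2 * (t ^ 1 * ∏ i, heat1 (t / d) (z i)) -
      t ^ 0 * ∏ i, heat1 (t / d) (z i)) (Set.Ioi 0) := (i1.const_mul 2).sub i0
  rw [e]
  refine ⟨(i2.const_mul (σ2 / 4)).add (j1.const_mul (1 - σ2 / 2)), ?_⟩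
  rw [integral_add (i2.const_mul (σ2 / 4)) (j1.const_mul (1 - σ2 / 2)), integral_const_mul,
    integral_const_mul]
  have := integral_sub (i1.const_mul 2) i0
  rw [this, integral_const_mul, Ggconv_eq hd, greenPow_toReal (by omega),
    greenPow_toReal (by omega), greenPow_toReal (by omega)]
  simp only [Nat.factorial]
  push_cast
  ring

/-! ### Asymptotics -/

/-- The Gaussian heat kernel in dimension `d` with covariance `t / d` times the identity, at
points of squared norm `r2`. -/
def gaussD (d : ℕ) (r2 t : ℝ) : ℝ := (√(2 * π * (t / d)))⁻¹ ^ d * exp (-(d * r2 / (2 * t)))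

lemma nrmZ_sq {d : ℕ} (z : Fin d → ℤ) : nrmZ d z ^ 2 = ∑ i, (z i : ℝ) ^ 2 :=
  Real.sq_sqrt (Finset.sum_nonneg fun _ _ => sq_nonneg _)

lemma prod_gauss1 {d : ℕ} (t : ℝ) (z : Fin d → ℤ) :
    ∏ i, gauss1 (t / d) (z i) = gaussD d (nrmZ d z ^ 2) t := by
  simp only [gauss1, gaussD]
  rw [Finset.prod_mul_distrib, Finset.prod_const, Finset.card_univ, Fintype.card_fin, ← exp_sum,
    nrmZ_sq, Finset.sum_neg_distrib, ← Finset.sum_div]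
  congr 3
  rcases eq_or_ne (d : ℝ) 0 with h | h
  · simp [h]
  · rcases eq_or_ne t 0 with h' | h'
    · simp [h']
    · field_simp

lemma gaussD_nonneg (d : ℕ) (r2 t : ℝ) : 0 ≤ gaussD d r2 t := by unfold gaussD; positivity

lemma gaussD_scale (d : ℕ) {R : ℝ} (hR : 0 < R) (u : ℝ) :
    gaussD d (R ^ 2) (R ^ 2 * u) = (R ^ d)⁻¹ * gaussD d 1 u := by
  unfold gaussD
  rw [show 2 * π * (R ^ 2 * u / d) = R ^ 2 * (2 * π * (u / d)) by ring,
    Real.sqrt_mul (by positivity), Real.sqrt_sq hR.le, mul_inv, mul_pow, mul_assoc, inv_pow]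
  congr 4
  rcases eq_or_ne u 0 with h | h
  · simp [h]
  · field_simp

/-- Exponential decay beats every power. -/
lemma rpow_mul_exp_le (p : ℝ) {c : ℝ} (hc : 0 < c) :
    ∃ C : ℝ, 0 < C ∧ ∀ x : ℝ, 1 ≤ x → x ^ p * exp (-(c * x)) ≤ C := by
  obtain ⟨N, hN⟩ := exists_nat_ge p
  refine ⟨N.factorial / c ^ N, by positivity, fun x hx => ?_⟩
  have hx0 : 0 < x := by linarith
  have h1 : x ^ p ≤ x ^ N := by
    rw [← Real.rpow_natCast]; exact Real.rpow_le_rpow_of_exponent_le hx hN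
  have h2 := Real.pow_div_factorial_le_exp (c * x) (by positivity) N
  rw [Real.exp_neg, ← div_eq_mul_inv, div_le_iff₀ (exp_pos _)]
  calc x ^ p ≤ x ^ N := h1
    _ = N.factorial / c ^ N * ((c * x) ^ N / N.factorial) := by rw [mul_pow]; field_simp
    _ ≤ _ := by gcongr

/-- Before time `R^(2-δ)` the Gaussian kernel at distance `R` is smaller than any power of `R`. -/
lemma gaussD_small_time {d : ℕ} (hd : 0 < d) {δ : ℝ} (hδ : 0 < δ) {m : ℝ} (hm : 0 ≤ m) :
    ∃ C : ℝ, 0 < C ∧ ∀ R : ℝ, 1 ≤ R → ∀ t : ℝ, 0 < t → t ≤ R ^ (2 - δ) →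
      gaussD d (R ^ 2) t ≤ C * R ^ (-m) := by
  have hd' : (0 : ℝ) < d := by exact_mod_cast hd
  obtain ⟨C, hC, h⟩ := rpow_mul_exp_le ((d : ℝ) / 2 + m / δ) (c := (d : ℝ) / 2) (by positivity)
  set K := (√(2 * π / d))⁻¹ ^ d with hK
  have hK0 : 0 < K := by positivity
  refine ⟨K * C, by positivity, fun R hR t ht htT => ?_⟩
  have hR0 : 0 < R := by linarith
  set x := R ^ 2 / t with hx
  have hx0 : 0 < x := by positivity
  have hxR : R ^ δ ≤ x := by
    rw [hx, le_div_iff₀ ht]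
    calc R ^ δ * t ≤ R ^ δ * R ^ (2 - δ) := by gcongr
      _ = R ^ 2 := by rw [← Real.rpow_add hR0]; norm_num
  have hx1 : 1 ≤ x := (Real.one_le_rpow hR hδ.le).trans hxR
  have e1 : (√(2 * π * (t / d)))⁻¹ ^ d = K * (√t)⁻¹ ^ d := by
    rw [show 2 * π * (t / d) = 2 * π / d * t by ring, Real.sqrt_mul (by positivity), mul_inv,
      mul_pow]
  have e2 : (√t)⁻¹ ^ d ≤ x ^ ((d : ℝ) / 2) := by
    have : x ^ ((d : ℝ) / 2) = (√x) ^ d := by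
      rw [Real.sqrt_eq_rpow, ← Real.rpow_natCast, ← Real.rpow_mul hx0.le]; congr 1; ring
    rw [this, hx, Real.sqrt_div (by positivity), Real.sqrt_sq hR0.le, div_eq_mul_inv]
    gcongr
    exact le_mul_of_one_le_left (by positivity) hR
  have e3 : exp (-(d * R ^ 2 / (2 * t))) = exp (-(d / 2 * x)) := by
    rw [hx]; congr 2; field_simp
  have e4 : 1 ≤ R ^ (-m) * x ^ (m / δ) := by
    have : (R ^ δ) ^ (m / δ) ≤ x ^ (m / δ) := by gcongr
    rw [← Real.rpow_mul hR0.le, mul_div_cancel₀ m hδ.ne'] at this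
    calc (1 : ℝ) = R ^ (-m) * R ^ m := by rw [← Real.rpow_add hR0]; simp
      _ ≤ _ := by gcongr
  calc gaussD d (R ^ 2) t = K * (√t)⁻¹ ^ d * exp (-(d / 2 * x)) := by rw [gaussD, e1, e3]
    _ ≤ K * x ^ ((d : ℝ) / 2) * exp (-(d / 2 * x)) := by gcongr
    _ ≤ K * x ^ ((d : ℝ) / 2) * exp (-(d / 2 * x)) * (R ^ (-m) * x ^ (m / δ)) :=
        le_mul_of_one_le_right (by positivity) e4
    _ = K * (x ^ ((d : ℝ) / 2 + m / δ) * exp (-(d / 2 * x))) * R ^ (-m) := by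
        rw [Real.rpow_add hx0]; ring
    _ ≤ K * C * R ^ (-m) := by gcongr; exact h x hx1

/-- Before time `R^(2-δ)` the walk is at a given point at distance `R` with probability smaller
than any power of `R`: Chernoff's bound for the largest coordinate. -/
lemma heat_small_time {d : ℕ} (hd : 0 < d) {δ : ℝ} (hδ : 0 < δ) (hδ2 : δ ≤ 2) (m : ℝ) :
    ∃ C : ℝ, 0 < C ∧ ∀ z : Fin d → ℤ, 1 ≤ nrmZ d z → ∀ t : ℝ, 0 < t →
      t ≤ nrmZ d z ^ (2 - δ) → ∏ i, heat1 (t / d) (z i) ≤ C * nrmZ d z ^ (-m) := by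
  have hd' : (1 : ℝ) ≤ d := by exact_mod_cast hd
  obtain ⟨C, hC, h⟩ := rpow_mul_exp_le (m * (2 / δ)) (c := (√d)⁻¹) (by positivity)
  refine ⟨exp (exp 1) * C, by positivity, fun z hR t ht htT => ?_⟩
  have hsq := nrmZ_sq z
  set R := nrmZ d z with hRdef
  have hR0 : 0 < R := by linarith
  obtain ⟨i, hi⟩ : ∃ i, R ^ 2 / d ≤ (z i : ℝ) ^ 2 := by
    by_contra! hc
    have : ∑ i, (z i : ℝ) ^ 2 < ∑ i : Fin d, R ^ 2 / d :=
      Finset.sum_lt_sum_of_nonempty ⟨⟨0, hd⟩, Finset.mem_univ _⟩ fun i _ => hc i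
    rw [Finset.sum_const, Finset.card_univ, Fintype.card_fin, nsmul_eq_mul,
      mul_div_cancel₀ _ (by positivity), hsq] at this
    exact lt_irrefl _ this
  have hzi : (√d)⁻¹ * R ≤ |(z i : ℝ)| := by
    rw [← Real.sqrt_sq_eq_abs]
    apply Real.le_sqrt_of_sq_le
    rw [mul_pow, inv_pow, Real.sq_sqrt (by positivity)]
    calc _ = R ^ 2 / d := by ring
      _ ≤ _ := hi
  set T := R ^ (2 - δ) with hT
  have hT1 : 1 ≤ T := Real.one_le_rpow hR (by linarith)
  have hT0 : 0 < T := by linarith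
  set l := (√T)⁻¹ with hl
  have hl0 : 0 < l := by positivity
  have hl2 : l ^ 2 = T⁻¹ := by rw [hl, inv_pow, Real.sq_sqrt hT0.le]
  have hcosh : t * ((cosh l - 1) / d) ≤ exp 1 := by
    have hx1 : l ^ 2 / 2 ≤ 1 := by
      rw [hl2]; have : T⁻¹ ≤ 1 := inv_le_one_of_one_le₀ hT1
      linarith
    have h1 := Real.cosh_le_exp_half_sq l
    have h2 : exp (l ^ 2 / 2) - 1 ≤ l ^ 2 / 2 * exp (l ^ 2 / 2) := by
      have := Real.add_one_le_exp (-(l ^ 2 / 2))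
      have h3 : exp (-(l ^ 2 / 2)) * exp (l ^ 2 / 2) = 1 := by rw [← exp_add]; simp
      nlinarith [exp_pos (l ^ 2 / 2)]
    have h3 : l ^ 2 / 2 * exp (l ^ 2 / 2) ≤ l ^ 2 * exp 1 := by
      have := exp_le_exp.2 hx1
      have := exp_pos (l ^ 2 / 2)
      nlinarith [sq_nonneg l]
    have h4 : (cosh l - 1) / d ≤ l ^ 2 * exp 1 :=
      (div_le_self (by linarith [Real.one_le_cosh l]) hd').trans (by linarith)
    calc _ ≤ T * (l ^ 2 * exp 1) := by
          gcongr
          exact div_nonneg (by linarith [Real.one_le_cosh l]) (by linarith)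
      _ = exp 1 := by rw [hl2]; field_simp
  have hch : ∏ i, heat1 (t / d) (z i) ≤ exp (t * ((cosh l - 1) / d) - l * |(z i : ℝ)|) := by
    rcases le_total 0 (z i : ℝ) with h0 | h0
    · rw [abs_of_nonneg h0]; exact prod_heat1_chernoff i l ht.le z
    · rw [abs_of_nonpos h0]
      have := prod_heat1_chernoff i (-l) ht.le z
      rw [cosh_neg] at this
      rwa [mul_neg, ← neg_mul]
  set y := l * R with hy
  have hyR : y = R ^ (δ / 2) := by
    rw [hy, hl, hT, Real.sqrt_eq_rpow, ← Real.rpow_mul hR0.le, ← Real.rpow_neg hR0.le]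
    nth_rw 2 [← Real.rpow_one R]
    rw [← Real.rpow_add hR0]; congr 1; ring
  have hy1 : 1 ≤ y := by rw [hyR]; exact Real.one_le_rpow hR (by positivity)
  have hyp : R ^ (-m) * y ^ (m * (2 / δ)) = 1 := by
    rw [hyR, ← Real.rpow_mul hR0.le, ← Real.rpow_add hR0]
    rw [show -m + δ / 2 * (m * (2 / δ)) = 0 by field_simp; ring, Real.rpow_zero]
  calc _ ≤ _ := hch
    _ ≤ exp (exp 1 + -((√d)⁻¹ * y)) := by
        apply exp_le_exp.2
        have : l * ((√d)⁻¹ * R) ≤ l * |(z i : ℝ)| := by gcongr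
        have e : (√d)⁻¹ * y = l * ((√d)⁻¹ * R) := by rw [hy]; ring
        linarith
    _ = exp (exp 1) * (y ^ (m * (2 / δ)) * exp (-((√d)⁻¹ * y))) * R ^ (-m) := by
        rw [exp_add]
        linear_combination (-(exp (exp 1) * exp (-((√d)⁻¹ * y)))) * hyp
    _ ≤ _ := by gcongr; exact h y hy1

lemma gaussD_le {d : ℕ} (hd : 0 < d) : ∃ C : ℝ, 0 < C ∧ ∀ t : ℝ, 0 < t → ∀ r2 : ℝ, 0 ≤ r2 →
    gaussD d r2 t ≤ C * t ^ (-(d : ℝ) / 2) := by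
  have hd' : (0 : ℝ) < d := by exact_mod_cast hd
  refine ⟨(√(2 * π / d))⁻¹ ^ d, by positivity, fun t ht r2 hr => ?_⟩
  have e0 : ((√t)⁻¹) ^ d = t ^ (-(d : ℝ) / 2) := by
    rw [Real.sqrt_eq_rpow, ← Real.rpow_neg ht.le, ← Real.rpow_natCast, ← Real.rpow_mul ht.le]
    congr 1; ring
  rw [gaussD, ← e0, ← mul_pow, ← mul_inv, ← Real.sqrt_mul (by positivity),
    show 2 * π * (t / d) = 2 * π / d * t by ring]
  refine mul_le_of_le_one_right (by positivity) (exp_le_one_iff.2 (neg_nonpos.2 (by positivity)))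

lemma measurable_gaussD (d : ℕ) (r2 : ℝ) : Measurable (gaussD d r2) := by
  unfold gaussD; fun_prop

lemma integrableOn_gaussD_one {d : ℕ} (hd : 6 < d) :
    IntegrableOn (fun u : ℝ => u ^ 2 * gaussD d 1 u) (Set.Ioi 0) := by
  obtain ⟨C, hC, h⟩ := gaussD_le (d := d) (by omega)
  obtain ⟨C', hC', h'⟩ := gaussD_small_time (d := d) (by omega) one_pos le_rfl
  have hd' : (6 : ℝ) < d := by exact_mod_cast hd
  have hm := measurable_gaussD d 1
  refine (integral_Ioi_bound (f := fun u : ℝ => u ^ 2 * gaussD d 1 u) (A := C') (B := C) (T := 1)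
    (a := 2 + -(d : ℝ) / 2) (by fun_prop) one_pos (by linarith) ?_ ?_).1
  · intro t ht ht1
    rw [abs_of_nonneg (mul_nonneg (by positivity) (gaussD_nonneg _ _ _))]
    have h1 := h' 1 le_rfl t ht (by simpa using ht1)
    simp only [one_pow, Real.one_rpow, mul_one] at h1
    exact (mul_le_of_le_one_left (gaussD_nonneg _ _ _) (pow_le_one₀ ht.le ht1)).trans h1
  · intro t ht
    have ht0 : 0 < t := by linarith
    rw [abs_of_nonneg (mul_nonneg (by positivity) (gaussD_nonneg _ _ _)), Real.rpow_add ht0]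
    calc _ ≤ t ^ 2 * (C * t ^ (-(d : ℝ) / 2)) := by gcongr; exact h t ht0 1 zero_le_one
      _ = _ := by norm_num; ring

/-- The constant of the continuum Green's function of order three, up to the factor `2`. -/
def gaussConst (d : ℕ) : ℝ := ∫ u in Set.Ioi (0 : ℝ), u ^ 2 * gaussD d 1 u

lemma gaussConst_pos {d : ℕ} (hd : 6 < d) : 0 < gaussConst d := by
  rw [gaussConst, setIntegral_pos_iff_support_of_nonneg_ae _ (integrableOn_gaussD_one hd)]
  · have : Set.Ioi (0 : ℝ) ⊆ Function.support (fun u : ℝ => u ^ 2 * gaussD d 1 u) := by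
      intro u hu
      have hu' : (0 : ℝ) < u := hu
      have hd' : (0 : ℝ) < d := by exact_mod_cast (by omega : 0 < d)
      rw [Function.mem_support]
      unfold gaussD
      positivity
    rw [Set.inter_eq_self_of_subset_right this]
    simp
  · exact ae_of_all _ fun u => mul_nonneg (sq_nonneg u) (gaussD_nonneg _ _ _)

/-- Brownian scaling of the leading term. -/
lemma integral_gaussD {d : ℕ} (hd : 6 < d) {R : ℝ} (hR : 0 < R) :
    IntegrableOn (fun t : ℝ => t ^ 2 * gaussD d (R ^ 2) t) (Set.Ioi 0) ∧
    ∫ t in Set.Ioi (0 : ℝ), t ^ 2 * gaussD d (R ^ 2) t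
      = gaussConst d * R ^ (-((d : ℝ) - 6)) := by
  have hR2 : 0 < R ^ 2 := by positivity
  have e : (fun u : ℝ => (R ^ 2 * u) ^ 2 * gaussD d (R ^ 2) (R ^ 2 * u))
      = fun u => (R ^ 4 * (R ^ d)⁻¹) * (u ^ 2 * gaussD d 1 u) := by
    ext u; rw [gaussD_scale d hR]; ring
  constructor
  · have := (integrableOn_Ioi_comp_mul_left_iff (fun t : ℝ => t ^ 2 * gaussD d (R ^ 2) t) 0 hR2)
    rw [mul_zero] at this
    rw [← this, e]
    exact (integrableOn_gaussD_one hd).const_mul _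
  · have := integral_comp_mul_left_Ioi (fun t : ℝ => t ^ 2 * gaussD d (R ^ 2) t) 0 hR2
    simp only [mul_zero, e] at this
    rw [integral_const_mul, smul_eq_mul, eq_inv_mul_iff_mul_eq₀ hR2.ne'] at this
    rw [← this, gaussConst, show -((d : ℝ) - 6) = 6 - d by ring, Real.rpow_sub hR,
      Real.rpow_natCast, show (6 : ℝ) = (6 : ℕ) by norm_num, Real.rpow_natCast]
    ring

/-- The quantitative form of the asymptotics: a loss `δ` in the truncation time `R^(2-δ)` costs
`δ (d-4) / 2` in the exponent of the error. -/
lemma Ggconv_bound {d : ℕ} (hd : 6 < d) {σ2 : ℝ} (hσ : 0 < σ2) {δ : ℝ} (hδ : 0 < δ) (hδ1 : δ ≤ 1) :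
    ∃ K : ℝ, ∀ z : Fin d → ℤ, 1 ≤ nrmZ d z →
      |Ggconv d σ2 z - σ2 / 4 * gaussConst d * nrmZ d z ^ (-((d : ℝ) - 6))|
        ≤ K * nrmZ d z ^ ((2 - δ) * (2 - (d : ℝ) / 2)) := by
  have hd0 : 0 < d := by omega
  have hd' : (6 : ℝ) < d := by exact_mod_cast hd
  obtain ⟨C, hC, hCb⟩ := heat_bounds hd0
  obtain ⟨C1, hC1, h1⟩ := heat_small_time hd0 hδ (by linarith) ((d : ℝ) + 2)
  obtain ⟨C2, hC2, h2⟩ := gaussD_small_time hd0 hδ (m := (d : ℝ) + 2) (by linarith)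
  set V := |1 - σ2 / 2| * 3 with hV
  have hV0 : 0 ≤ V := by positivity
  set A := (σ2 / 4 + V) * C1 + σ2 / 4 * C2 with hA
  have hA0 : 0 < A := by positivity
  set B := σ2 / 4 * C + V * C with hB
  have hB0 : 0 < B := by positivity
  refine ⟨A + B * (1 / ((d : ℝ) / 2 - 2)), fun z hR => ?_⟩
  set R := nrmZ d z with hRdef
  have hR0 : 0 < R := by linarith
  set T := R ^ (2 - δ) with hT
  have hT1 : 1 ≤ T := Real.one_le_rpow hR (by linarith)
  have hT0 : 0 < T := by linarith
  have hTR : T ≤ R ^ 2 := by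
    rw [← Real.rpow_natCast]; exact Real.rpow_le_rpow_of_exponent_le hR (by push_cast; linarith)
  obtain ⟨iQ, eQ⟩ := Ggconv_eq_integral hd σ2 z
  obtain ⟨iH, eH⟩ := integral_gaussD hd hR0
  have iH' : IntegrableOn (fun t : ℝ => σ2 / 4 * (t ^ 2 * gaussD d (R ^ 2) t)) (Set.Ioi 0) :=
    iH.const_mul _
  rw [eQ, mul_assoc, ← eH, ← integral_const_mul, ← integral_sub iQ iH']
  have hlin : ∀ t : ℝ, 0 < t → |(1 - σ2 / 2) * (2 * t - 1)| ≤ V * max t 1 := by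
    intro t ht
    rw [abs_mul, hV, mul_assoc]
    gcongr
    rw [abs_le]
    constructor <;> linarith [le_max_left t 1, le_max_right t 1]
  have key := integral_Ioi_bound (f := fun t => wt σ2 t * ∏ i, heat1 (t / d) (z i) -
      σ2 / 4 * (t ^ 2 * gaussD d (R ^ 2) t)) (A := A * (T ^ 2 * R ^ (-((d : ℝ) + 2)))) (B := B)
      (T := T) (a := 1 - (d : ℝ) / 2) (iQ.sub iH').aestronglyMeasurable hT0 (by linarith) ?_ ?_
  · refine key.2.trans ?_
    rw [show 1 - (d : ℝ) / 2 + 1 = 2 - (d : ℝ) / 2 by ring,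
      add_mul A (B * (1 / ((d : ℝ) / 2 - 2)))]
    refine add_le_add ?_ ?_
    · rw [mul_assoc]
      gcongr
      calc T ^ 2 * R ^ (-((d : ℝ) + 2)) * T = T ^ 3 * R ^ (-((d : ℝ) + 2)) := by ring
        _ ≤ (R ^ 2) ^ 3 * R ^ (-((d : ℝ) + 2)) := by gcongr
        _ = R ^ (4 - (d : ℝ)) := by
            rw [← pow_mul, ← Real.rpow_natCast, ← Real.rpow_add hR0]
            congr 1; push_cast; ring
        _ ≤ _ := Real.rpow_le_rpow_of_exponent_le hR (by nlinarith)
    · rw [hT, ← Real.rpow_mul hR0.le, mul_assoc]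
      apply le_of_eq
      congr 1
      rw [show -(2 - (d : ℝ) / 2) = (d : ℝ) / 2 - 2 by ring]
      ring
  · intro t ht htT
    have hq0 := prod_heat1_nonneg hd0 ht.le z
    have hq := h1 z hR t ht htT
    have hg := h2 R hR t ht htT
    have hg0 := gaussD_nonneg d (R ^ 2) t
    have ht2 : t ^ 2 ≤ T ^ 2 := by gcongr
    have hmax : max t 1 ≤ T ^ 2 := max_le (by nlinarith) (by nlinarith)
    have hw : |wt σ2 t| ≤ (σ2 / 4 + V) * T ^ 2 := by
      rw [wt]
      refine (abs_add_le _ _).trans ?_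
      rw [add_mul]
      refine add_le_add ?_ ((hlin t ht).trans (by gcongr))
      rw [abs_of_nonneg (by positivity)]
      gcongr
    rw [sub_eq_add_neg]
    refine (abs_add_le _ _).trans ?_
    rw [abs_neg, abs_mul, abs_of_nonneg hq0,
      abs_of_nonneg (by positivity : 0 ≤ σ2 / 4 * (t ^ 2 * gaussD d (R ^ 2) t))]
    calc _ ≤ (σ2 / 4 + V) * T ^ 2 * (C1 * R ^ (-((d : ℝ) + 2)))
          + σ2 / 4 * (T ^ 2 * (C2 * R ^ (-((d : ℝ) + 2)))) := by gcongr
      _ = _ := by rw [hA]; ring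
  · intro t htT
    have ht1 : 1 < t := by linarith
    have ht : 0 < t := by linarith
    obtain ⟨b1, b2⟩ := hCb t ht z
    rw [prod_gauss1] at b2
    have hl := hlin t ht
    rw [max_eq_left ht1.le] at hl
    have e : wt σ2 t * ∏ i, heat1 (t / d) (z i) - σ2 / 4 * (t ^ 2 * gaussD d (R ^ 2) t)
        = σ2 / 4 * t ^ 2 * (∏ i, heat1 (t / d) (z i) - gaussD d (R ^ 2) t)
          + (1 - σ2 / 2) * (2 * t - 1) * ∏ i, heat1 (t / d) (z i) := by
      rw [wt]; ring
    rw [e]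
    refine (abs_add_le _ _).trans ?_
    rw [abs_mul, abs_mul _ (∏ i, heat1 (t / d) (z i)),
      abs_of_nonneg (by positivity : 0 ≤ σ2 / 4 * t ^ 2)]
    have r1 : t ^ 2 * t ^ (-(d : ℝ) / 2 - 1) = t ^ (1 - (d : ℝ) / 2) := by
      rw [← Real.rpow_natCast, ← Real.rpow_add ht]; congr 1; push_cast; ring
    have r2 : t * t ^ (-(d : ℝ) / 2) = t ^ (1 - (d : ℝ) / 2) := by
      nth_rw 1 [← Real.rpow_one t]
      rw [← Real.rpow_add ht]; congr 1; ring
    calc _ ≤ σ2 / 4 * t ^ 2 * (C * t ^ (-(d : ℝ) / 2 - 1))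
          + V * t * (C * t ^ (-(d : ℝ) / 2)) := by gcongr
      _ = σ2 / 4 * C * (t ^ 2 * t ^ (-(d : ℝ) / 2 - 1)) + V * C * (t * t ^ (-(d : ℝ) / 2)) := by
          ring
      _ = _ := by rw [r1, r2, hB]; ring

theorem Ggconv_asymptotics (d : ℕ) (hd : 6 < d) (σ2 : ℝ) (hσ : 0 < σ2) :
    ∃ cGg : ℝ, 0 < cGg ∧ ∀ ε : ℝ, 0 < ε →
      Tendsto
        (fun z : Fin d → ℤ =>
          nrmZ d z ^ ((d : ℝ) - 4 - ε) *
            (Ggconv d σ2 z - cGg * nrmZ d z ^ (-((d : ℝ) - 6))))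
        (Filter.comap (nrmZ d) atTop) (nhds 0) := by
  have hd' : (6 : ℝ) < d := by exact_mod_cast hd
  have hc := gaussConst_pos hd
  refine ⟨σ2 / 4 * gaussConst d, by positivity, fun ε hε => ?_⟩
  -- This choice of the truncation exponent makes the total exponent at most `-ε / 2`.
  set δ := min 1 (ε / ((d : ℝ) - 4)) with hδdef
  have hd4 : (0 : ℝ) < d - 4 := by linarith
  have hδ : 0 < δ := lt_min one_pos (by positivity)
  have hδε : δ * ((d : ℝ) - 4) ≤ ε := by
    rw [← le_div_iff₀ hd4]; exact min_le_right _ _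
  obtain ⟨K, hK⟩ := Ggconv_bound hd hσ hδ (min_le_left _ _)
  have hlim : Tendsto (fun z : Fin d → ℤ => |K| * nrmZ d z ^ (-(ε / 2)))
      (Filter.comap (nrmZ d) atTop) (nhds 0) := by
    have := ((tendsto_rpow_neg_atTop (by positivity : 0 < ε / 2)).comp
      (tendsto_comap (f := nrmZ d) (x := atTop))).const_mul |K|
    simpa using this
  refine squeeze_zero_norm' ?_ hlim
  filter_upwards [tendsto_comap.eventually (eventually_ge_atTop (1 : ℝ))] with z hz
  have hR0 : 0 < nrmZ d z := by linarith
  rw [norm_mul, Real.norm_of_nonneg (by positivity), Real.norm_eq_abs]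
  calc _ ≤ nrmZ d z ^ ((d : ℝ) - 4 - ε) * (|K| * nrmZ d z ^ ((2 - δ) * (2 - (d : ℝ) / 2))) := by
        gcongr
        exact (hK z hz).trans (by gcongr; exact le_abs_self K)
    _ = |K| * nrmZ d z ^ ((d : ℝ) - 4 - ε + (2 - δ) * (2 - (d : ℝ) / 2)) := by
        rw [Real.rpow_add hR0]; ring
    _ ≤ _ := by
        gcongr
        nlinarith

end

/-- For `d > 6` there is a constant `c_{G⋆g} > 0` (depending only on `d` and
`σ²`) such that for every `ε > 0`,
`(G⋆g)(z) = c_{G⋆g} ‖z‖^{-(d-6)} + o(‖z‖^{-(d-4-ε)})` as `‖z‖ → ∞`. -/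
theorem greens_function_convolution_asymptotics (d : ℕ) (hd : 6 < d) (σ2 : ℝ) (hσ : 0 < σ2) :
    ∃ cGg : ℝ, 0 < cGg ∧ ∀ ε : ℝ, 0 < ε →
      Tendsto
        (fun z : Fin d → ℤ =>
          nrmZ d z ^ ((d : ℝ) - 4 - ε) *
            (Ggconv d σ2 z - cGg * nrmZ d z ^ (-((d : ℝ) - 6))))
        (Filter.comap (nrmZ d) atTop) (nhds 0) := by
  exact Ggconv_asymptotics d hd σ2 hσ
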